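/- (Theorem 2) The supervisory control system S/G is IS-attackable — i.e., there exists an attacker A and an observation ασ ∈ P(L(S_A/G)) with σ ∈ Σ_o such that A is stealthy along α and E^I_{S_A/G}(ασ) ⊆ X_sec — if and only if there exists a single attack structure m of the simplified AAS M^s such that the induced attack strategy A_m is IS-detectable. -/

import Mathlib

open scoped Classical

namespace DES

variable {X E Z : Type*}

/-- Run of a partial automaton on a string of events. -/
def runStr (δ : X → E → Option X) : X → List E → Option X
  | x, [] => some x
  | x, σ :: s => (δ x σ).bind fun y => runStr δ y s

/-- Open-loop language generated from a state. -/
def LangFrom (δ : X → E → Option X) (x0 : X) : Set (List E) :=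
  {s | (runStr δ x0 s).isSome}

/-- Open-loop language of the plant. -/
def Lang (δ : X → E → Option X) (X0 : Set X) : Set (List E) :=
  {s | ∃ x0 ∈ X0, s ∈ LangFrom δ x0}

/-- Natural projection erasing unobservable events. -/
noncomputable def proj (Eobs : Set E) (s : List E) : List E :=
  s.filter fun e => decide (e ∈ Eobs)

/-- Closed-loop language of `S/G` from initial state `x0`. -/
inductive CLLang (δ : X → E → Option X) (Eobs : Set E) (S : List E → Set E) (x0 : X) :
    List E → Prop
  | nil : CLLang δ Eobs S x0 []
  | snoc (s : List E) (σ : E) : CLLang δ Eobs S x0 s →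
      (runStr δ x0 (s ++ [σ])).isSome → σ ∈ S (proj Eobs s) → CLLang δ Eobs S x0 (s ++ [σ])

/-- Closed-loop language of `S/G`. -/
def CLLangAll (δ : X → E → Option X) (Eobs : Set E) (S : List E → Set E) (X0 : Set X) :
    Set (List E) := {s | ∃ x0 ∈ X0, CLLang δ Eobs S x0 s}

/-- Projection of a language. -/
def projSet (Eobs : Set E) (L : Set (List E)) : Set (List E) := proj Eobs '' L

/-- Current-state estimate of the closed-loop system. -/
def ECest (δ : X → E → Option X) (Eobs : Set E) (S : List E → Set E) (X0 : Set X)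
    (α : List E) : Set X :=
  {x | ∃ x0 ∈ X0, ∃ s, CLLang δ Eobs S x0 s ∧ proj Eobs s = α ∧ runStr δ x0 s = some x}

/-- Initial-state estimate of the closed-loop system. -/
def EIest (δ : X → E → Option X) (Eobs : Set E) (S : List E → Set E) (X0 : Set X)
    (α : List E) : Set X :=
  {x0 | x0 ∈ X0 ∧ ∃ s, CLLang δ Eobs S x0 s ∧ proj Eobs s = α}

/-- Unobservable reach of `q` under control decision `γ`. -/
def URset (δ : X → E → Option X) (Euo γ : Set E) (q : Set X) : Set X :=
  {y | ∃ x ∈ q, ∃ s : List E, (∀ e ∈ s, e ∈ Euo ∩ γ) ∧ runStr δ x s = some y}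

/-- Observable reach of `q` upon occurrence of `σ`. -/
def NXset (δ : X → E → Option X) (σ : E) (q : Set X) : Set X :=
  {y | ∃ x ∈ q, δ x σ = some y}

/-- Events that can be observed from `q` under control decision `γ`. -/
def Oset (δ : X → E → Option X) (Eobs Euo : Set E) (q : Set X) (γ : Set E) : Set E :=
  {σ | σ ∈ Eobs ∩ γ ∧ ∃ x ∈ q, ∃ w : List E, (∀ e ∈ w, e ∈ Euo ∩ γ) ∧
      (runStr δ x (w ++ [σ])).isSome}

/-- Transition function of the augmented system `~G`. -/
def augDelta (δ : X → E → Option X) : X × X → E → Option (X × X) :=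
  fun p σ => (δ p.2 σ).map fun y => (p.1, y)

/-- Initial states of the augmented system. -/
def augX0 (X0 : Set X) : Set (X × X) := {p | p.1 ∈ X0 ∧ p.2 = p.1}

/-- First components of a set of augmented states. -/
def Iset (qt : Set (X × X)) : Set X := Prod.fst '' qt

/-- Active events of the supervisor automaton `H` at state `z`. -/
def ΔH (ξ : Z → E → Option Z) (z : Z) : Set E := {σ | (ξ z σ).isSome}

/-- Active events at `some z`, and `∅` at the attack-detected state `z_att = none`. -/
def ΔHopt (ξ : Z → E → Option Z) : Option Z → Set E
  | some z => ΔH ξ z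
  | none => ∅

/-- `H = (Z, Σ, ξ, z₀)` realizes supervisor `S`. -/
def Realizes (ξ : Z → E → Option Z) (z0 : Z) (δ : X → E → Option X)
    (Eobs : Set E) (S : List E → Set E) (X0 : Set X) : Prop :=
  (∀ z σ z', ξ z σ = some z' → z' ≠ z → σ ∈ Eobs) ∧
  (∀ s ∈ CLLangAll δ Eobs S X0, ∃ z, runStr ξ z0 s = some z ∧ ΔH ξ z = S (proj Eobs s))

/-- Product automaton `G × H`. -/
def prodDelta (δ : X → E → Option X) (ξ : Z → E → Option Z) :
    X × Z → E → Option (X × Z) :=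
  fun p σ => (δ p.1 σ).bind fun x' => (ξ p.2 σ).map fun z' => (x', z')

/-- Environment states of the AAS: `(q, qt, z)` with `z = none` encoding `z_att`. -/
abbrev EnvState (X Z : Type*) := Set X × Set (X × X) × Option Z

/-- Attack states of the AAS: `(q, qt, z, σ)`. -/
abbrev AtkState (X Z E : Type*) := Set X × Set (X × X) × Z × E

/-- States of the AAS. -/
abbrev MState (X Z E : Type*) := EnvState X Z ⊕ AtkState X Z E

/-- Events of the AAS: `Sum.inl σ` is a genuine event, `Sum.inr (some σ)` is `σ̂`,
and `Sum.inr none` is `ε̂`. -/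
abbrev MEvent (E : Type*) := E ⊕ Option E

/-- Action space `V(σ)` of the attacker. -/
def Vmap (Ev : Set E) (σ : E) : Set (Option E) :=
  if σ ∈ Ev then {a | ∃ σ', a = some σ' ∧ σ' ∈ Ev} ∪ {none} else {some σ}

/-- Transition function of the All Attack Structure. -/
noncomputable def AASf (δ : X → E → Option X) (Eobs Euo Ev : Set E)
    (ξ : Z → E → Option Z) : MState X Z E → MEvent E → Option (MState X Z E)
  | Sum.inl (q, qt, some z), Sum.inl σ =>
      if σ ∈ Oset (augDelta δ) Eobs Euo qt (ΔH ξ z) then some (Sum.inr (q, qt, z, σ))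
      else none
  | Sum.inr (q, qt, z, σ), Sum.inr a =>
      if a ∈ Vmap Ev σ then
        let q' : Set X := match a with
          | some σa => NXset δ σa (URset δ Euo (ΔH ξ z) q)
          | none => URset δ Euo (ΔH ξ z) q
        let qt' : Set (X × X) := NXset (augDelta δ) σ (URset (augDelta δ) Euo (ΔH ξ z) qt)
        if q'.Nonempty then
          match a with
          | some σa => (ξ z σa).map fun z' => Sum.inl (q', qt', some z')
          | none => some (Sum.inl (q', qt', some z))
        else some (Sum.inl (q', qt', (none : Option Z)))
      else none
  | _, _ => none

/-- Initial state of the AAS. -/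
def AASq0 (X0 : Set X) (z0 : Z) : MState X Z E := Sum.inl (X0, augX0 X0, some z0)

/-- Actual observation of an extended string. -/
def obs : List (MEvent E) → List E :=
  List.filterMap fun e => match e with | Sum.inl σ => some σ | Sum.inr _ => none

/-- Tampered (doctored) observation of an extended string. -/
def tam : List (MEvent E) → List E :=
  List.filterMap fun e => match e with | Sum.inl _ => none | Sum.inr a => a

/-- `h` is an extended string of the structure with transition function `f`
ending at an environment state. -/
def LeM (f : MState X Z E → MEvent E → Option (MState X Z E)) (q0 : MState X Z E)
    (h : List (MEvent E)) : Prop :=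
  ∃ qe : EnvState X Z, runStr f q0 h = some (Sum.inl qe)

/-- `A` is an attacker (with `none` encoding `ε`). -/
def IsAttacker (δ : X → E → Option X) (Eobs Ev : Set E) (X0 : Set X)
    (A : List E → Option E) : Prop :=
  A [] = none ∧
  ∀ α σ, (α ++ [σ]) ∈ projSet Eobs (Lang δ X0) →
    (σ ∉ Ev → A (α ++ [σ]) = some σ) ∧ (σ ∈ Ev → A (α ++ [σ]) ∈ Vmap Ev σ)

/-- The string-modification map `g_A` induced by attacker `A`. -/
def gA (A : List E → Option E) (α : List E) : List E :=
  (List.range α.length).filterMap fun i => A (α.take (i + 1))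

/-- The extended string `α_A` determined by attacker `A` and observation `α`
(the first argument is the accumulated prefix). -/
def extStr (A : List E → Option E) : List E → List E → List (MEvent E)
  | _, [] => []
  | pre, σ :: rest =>
      Sum.inl σ :: Sum.inr (A (pre ++ [σ])) :: extStr A (pre ++ [σ]) rest

/-- Positive detected environment state. -/
def PosDet (Xsec : Set X) (qe : EnvState X Z) : Prop := Iset qe.2.1 ⊆ Xsec

/-- Negative detected environment state. -/
def NegDet (Xsec : Set X) (qe : EnvState X Z) : Prop := Iset qe.2.1 ∩ Xsec = ∅

/-- Undetectable environment state. -/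
def Undet (δ : X → E → Option X) (Euo : Set E) (ξ : Z → E → Option Z)
    (Xsec : Set X) (qe : EnvState X Z) : Prop :=
  (Iset qe.2.1 ∩ Xsec).Nonempty ∧
  ∀ p ∈ URset (augDelta δ) Euo (ΔHopt ξ qe.2.2) qe.2.1, p.1 ∈ Xsec →
    ∃ p' ∈ URset (augDelta δ) Euo (ΔHopt ξ qe.2.2) qe.2.1, p'.2 = p.2 ∧ p'.1 ∉ Xsec

/-- Transition function of the simplified AAS: all outgoing transitions from
detected and undetectable environment states are removed. -/
noncomputable def SAASf (δ : X → E → Option X) (Eobs Euo Ev : Set E)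
    (ξ : Z → E → Option Z) (Xsec : Set X) :
    MState X Z E → MEvent E → Option (MState X Z E) := fun st e =>
  match st with
  | Sum.inl qe =>
      if PosDet Xsec qe ∨ NegDet Xsec qe ∨ Undet δ Euo ξ Xsec qe then none
      else AASf δ Eobs Euo Ev ξ st e
  | Sum.inr _ => AASf δ Eobs Euo Ev ξ st e

/-- Reachability in a structure over AAS states. -/
def ReachableFrom (f : MState X Z E → MEvent E → Option (MState X Z E))
    (st st' : MState X Z E) : Prop := ∃ t, runStr f st t = some st'

/-- `fm` is (the transition function of) a single attack structure of the
simplified AAS. -/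
def IsSAS (δ : X → E → Option X) (Eobs Euo Ev : Set E) (ξ : Z → E → Option Z)
    (z0 : Z) (X0 Xsec : Set X)
    (fm : MState X Z E → MEvent E → Option (MState X Z E)) : Prop :=
  (∀ st e st', fm st e = some st' → SAASf δ Eobs Euo Ev ξ Xsec st e = some st') ∧
  (∀ qa : AtkState X Z E, ReachableFrom fm (AASq0 X0 z0) (Sum.inr qa) →
      ∃! e, (fm (Sum.inr qa) e).isSome = true) ∧
  (∀ qe : EnvState X Z, ReachableFrom fm (AASq0 X0 z0) (Sum.inl qe) →
      ∀ e, fm (Sum.inl qe) e = SAASf δ Eobs Euo Ev ξ Xsec (Sum.inl qe) e)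

/-- `Am` is the attack strategy induced by the single attack structure `fm`. -/
def InducedStrategy (δ : X → E → Option X) (Eobs : Set E) (X0 : Set X)
    (fm : MState X Z E → MEvent E → Option (MState X Z E)) (z0 : Z)
    (Am : List E → Option E) : Prop :=
  Am [] = none ∧
  ∀ α σ, (α ++ [σ]) ∈ projSet Eobs (Lang δ X0) →
    ((∀ h, LeM fm (AASq0 X0 z0) h → obs h ≠ α ++ [σ]) → Am (α ++ [σ]) = some σ) ∧
    (∀ h, LeM fm (AASq0 X0 z0) h → obs h = α ++ [σ] →
        h.getLast? = some (Sum.inr (Am (α ++ [σ]))))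

/-- Attacker `A` is IS-detectable. -/
def ISDetectable (δ : X → E → Option X) (Eobs : Set E) (S : List E → Set E)
    (X0 Xsec : Set X) (A : List E → Option E) : Prop :=
  ∃ α σ, σ ∈ Eobs ∧
    (α ++ [σ]) ∈ projSet Eobs (CLLangAll δ Eobs (fun β => S (gA A β)) X0) ∧
    (ECest δ Eobs S X0 (gA A α)).Nonempty ∧
    EIest δ Eobs (fun β => S (gA A β)) X0 (α ++ [σ]) ⊆ Xsec


/-!
Fix an attacker `A` and an observation `β` along which it is stealthy. The environment state
reached in the AAS by playing `A` along `β` carries, up to unobservable reach, the supervisor's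
current-state estimate of `gA A β` and the estimate of the augmented plant after `β`. The first
components of the latter form the initial-state estimate, so a detection by `A` is a path of the
AAS to a positive detected state. A single attack structure is memoryless whereas `A` need not be;
but choosing at each attack state an action that minimizes the number of rounds left before a
positive detected state is memoryless and also reaches one. Passing to the simplified AAS cuts no
such path: if every secret state of the augmented estimate is masked by a non-secret one, this
remains so forever.
-/

section Runs

theorem runStr_append (δ : X → E → Option X) (x : X) (s t : List E) :
    runStr δ x (s ++ t) = (runStr δ x s).bind fun y => runStr δ y t := by
  induction s generalizing x with
  | nil => rfl
  | cons σ s ih => simp only [List.cons_append, runStr, ih, Option.bind_assoc]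

theorem runStr_singleton (δ : X → E → Option X) (x : X) (σ : E) : runStr δ x [σ] = δ x σ := by
  simp [runStr]

theorem runStr_append_singleton (δ : X → E → Option X) (x : X) (s : List E) (σ : E) :
    runStr δ x (s ++ [σ]) = (runStr δ x s).bind fun y => δ y σ := by
  simp only [runStr_append, runStr_singleton]

theorem runStr_augDelta (δ : X → E → Option X) (p : X × X) (s : List E) :
    runStr (augDelta δ) p s = (runStr δ p.2 s).map fun y => (p.1, y) := by
  induction s generalizing p with
  | nil => rfl
  | cons σ s ih => cases h : δ p.2 σ <;> simp [runStr, augDelta, h, ih]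

theorem proj_append_singleton_of_mem {Eobs : Set E} {σ : E} (hσ : σ ∈ Eobs) (s : List E) :
    proj Eobs (s ++ [σ]) = proj Eobs s ++ [σ] := by
  simp [proj, hσ]

theorem proj_append_singleton_of_notMem {Eobs : Set E} {σ : E} (hσ : σ ∉ Eobs) (s : List E) :
    proj Eobs (s ++ [σ]) = proj Eobs s := by
  simp [proj, hσ]

end Runs

section Reach

variable {δ : X → E → Option X} {Eobs Euo γ : Set E}

theorem subset_URset (q : Set X) : q ⊆ URset δ Euo γ q :=
  fun x hx => ⟨x, hx, [], by simp, rfl⟩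

theorem URset_step {q : Set X} {x y : X} {e : E} (hx : x ∈ URset δ Euo γ q)
    (he : e ∈ Euo ∩ γ) (hy : δ x e = some y) : y ∈ URset δ Euo γ q := by
  obtain ⟨x', hx', s, hs, hrun⟩ := hx
  refine ⟨x', hx', s ++ [e], ?_, by simp [runStr_append_singleton, hrun, hy]⟩
  exact List.forall_mem_append.2 ⟨hs, List.forall_mem_singleton.2 he⟩

theorem URset_subset_of_closed {q r : Set X} (hqr : q ⊆ r)
    (hr : ∀ x ∈ r, ∀ e ∈ Euo ∩ γ, ∀ y, δ x e = some y → y ∈ r) : URset δ Euo γ q ⊆ r := by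
  rintro y ⟨x, hx, s, hs, hrun⟩
  replace hx := hqr hx
  induction s generalizing x with
  | nil => exact Option.some.inj hrun ▸ hx
  | cons e s ih =>
    obtain ⟨x', hx', hrun⟩ := Option.bind_eq_some_iff.1 hrun
    exact ih x' (fun e he => hs e (List.mem_cons_of_mem _ he)) hrun
      (hr x hx e (hs e List.mem_cons_self) x' hx')

theorem URset_nonempty_iff {q : Set X} : (URset δ Euo γ q).Nonempty ↔ q.Nonempty :=
  ⟨fun ⟨_, x, hx, _⟩ => ⟨x, hx⟩, fun h => h.mono (subset_URset q)⟩

theorem mem_Oset_iff {q : Set X} {σ : E} :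
    σ ∈ Oset δ Eobs Euo q γ ↔
      σ ∈ Eobs ∧ σ ∈ γ ∧ (NXset δ σ (URset δ Euo γ q)).Nonempty := by
  simp only [Oset, runStr_append_singleton, Set.mem_ofPred_eq, Set.mem_inter_iff, and_assoc]
  refine and_congr_right fun _ => and_congr_right fun _ => ⟨?_, ?_⟩
  · rintro ⟨x, hx, w, hw, hrun⟩
    obtain ⟨y, hy⟩ := Option.isSome_iff_exists.1 hrun
    obtain ⟨u, hu, hy⟩ := Option.bind_eq_some_iff.1 hy
    exact ⟨y, u, ⟨x, hx, w, hw, hu⟩, hy⟩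
  · rintro ⟨y, u, ⟨x, hx, w, hw, hu⟩, hy⟩
    exact ⟨x, hx, w, hw, by simp [hu, hy]⟩

theorem mem_URset_augDelta_iff {qt : Set (X × X)} {p : X × X} :
    p ∈ URset (augDelta δ) Euo γ qt ↔ p.2 ∈ URset δ Euo γ {y | (p.1, y) ∈ qt} := by
  constructor
  · rintro ⟨⟨x0, y⟩, hy, w, hw, hrun⟩
    rw [runStr_augDelta] at hrun
    obtain ⟨x, hx, rfl⟩ := Option.map_eq_some_iff.1 hrun
    exact ⟨y, hy, w, hw, hx⟩
  · rintro ⟨y, hy, w, hw, hrun⟩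
    exact ⟨_, hy, w, hw, by rw [runStr_augDelta, hrun]; rfl⟩

theorem mem_NXset_augDelta_iff {σ : E} {qt : Set (X × X)} {p : X × X} :
    p ∈ NXset (augDelta δ) σ qt ↔ p.2 ∈ NXset δ σ {y | (p.1, y) ∈ qt} := by
  constructor
  · rintro ⟨⟨x0, y⟩, hy, hstep⟩
    obtain ⟨x, hx, rfl⟩ := Option.map_eq_some_iff.1 hstep
    exact ⟨y, hy, hx⟩
  · rintro ⟨y, hy, hstep⟩
    exact ⟨_, hy, by simp [augDelta, hstep]⟩

theorem Iset_URset_augDelta (qt : Set (X × X)) :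
    Iset (URset (augDelta δ) Euo γ qt) = Iset qt := by
  refine Set.Subset.antisymm ?_ (Set.image_mono (subset_URset qt))
  rintro _ ⟨p, hp, rfl⟩
  obtain ⟨y, hy, -⟩ := mem_URset_augDelta_iff.1 hp
  exact ⟨_, hy, rfl⟩

theorem Iset_NXset_augDelta_subset (σ : E) (qt : Set (X × X)) :
    Iset (NXset (augDelta δ) σ qt) ⊆ Iset qt := by
  rintro _ ⟨p, hp, rfl⟩
  obtain ⟨y, hy, -⟩ := mem_NXset_augDelta_iff.1 hp
  exact ⟨_, hy, rfl⟩

/-- The observable reach `NX_a` for an attack action `a`: `NX_σ` for `a = some σ`, and the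
identity for `a = none`, which encodes `ε`. -/
def NXopt (δ : X → E → Option X) : Option E → Set X → Set X
  | some σ, q => NXset δ σ q
  | none, q => q

end Reach

section Estimates

variable {δ : X → E → Option X} {Eobs : Set E} {S : List E → Set E} {X0 : Set X}
  {α : List E} {σ : E}

theorem CLLang.exists_runStr_eq_some {x0 : X} {s : List E} (hs : CLLang δ Eobs S x0 s) :
    ∃ x, runStr δ x0 s = some x := by
  cases hs with
  | nil => exact ⟨x0, rfl⟩
  | snoc s σ _ hrun _ => exact Option.isSome_iff_exists.1 hrun

theorem subset_ECest_nil : X0 ⊆ ECest δ Eobs S X0 [] :=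
  fun x hx => ⟨x, hx, [], .nil, rfl, rfl⟩

theorem ECest_step_obs {x y : X} (hx : x ∈ ECest δ Eobs S X0 α) (hobs : σ ∈ Eobs)
    (hctrl : σ ∈ S α) (hy : δ x σ = some y) : y ∈ ECest δ Eobs S X0 (α ++ [σ]) := by
  obtain ⟨x0, hx0, s, hs, rfl, hrun⟩ := hx
  have hrun' : runStr δ x0 (s ++ [σ]) = some y := by simp [runStr_append_singleton, hrun, hy]
  exact ⟨x0, hx0, s ++ [σ], .snoc s σ hs (by simp [hrun']) hctrl,
    proj_append_singleton_of_mem hobs s, hrun'⟩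

theorem ECest_step_unobs {x y : X} (hx : x ∈ ECest δ Eobs S X0 α) (hunobs : σ ∉ Eobs)
    (hctrl : σ ∈ S α) (hy : δ x σ = some y) : y ∈ ECest δ Eobs S X0 α := by
  obtain ⟨x0, hx0, s, hs, rfl, hrun⟩ := hx
  have hrun' : runStr δ x0 (s ++ [σ]) = some y := by simp [runStr_append_singleton, hrun, hy]
  exact ⟨x0, hx0, s ++ [σ], .snoc s σ hs (by simp [hrun']) hctrl,
    proj_append_singleton_of_notMem hunobs s, hrun'⟩

theorem ECest_induction {motive : List E → X → Prop} (init : ∀ x ∈ X0, motive [] x)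
    (obs : ∀ α σ x y, x ∈ ECest δ Eobs S X0 α → σ ∈ Eobs → σ ∈ S α → δ x σ = some y →
      motive (α ++ [σ]) y)
    (unobs : ∀ α σ x y, motive α x → σ ∉ Eobs → σ ∈ S α → δ x σ = some y → motive α y)
    {x : X} (hx : x ∈ ECest δ Eobs S X0 α) : motive α x := by
  obtain ⟨x0, hx0, s, hs, rfl, hrun⟩ := hx
  induction hs generalizing x with
  | nil => exact Option.some.inj hrun ▸ init x0 hx0
  | snoc s σ hs _ hctrl ih =>
    rw [runStr_append_singleton] at hrun
    obtain ⟨y, hy, hyx⟩ := Option.bind_eq_some_iff.1 hrun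
    by_cases hσ : σ ∈ Eobs
    · rw [proj_append_singleton_of_mem hσ]
      exact obs _ σ y x ⟨x0, hx0, s, hs, rfl, hy⟩ hσ hctrl hyx
    · rw [proj_append_singleton_of_notMem hσ]
      exact unobs _ σ y x (ih hy) hσ hctrl hyx

theorem URset_subset_ECest {q : Set X} (hq : q ⊆ ECest δ Eobs S X0 α) :
    URset δ Eobsᶜ (S α) q ⊆ ECest δ Eobs S X0 α :=
  URset_subset_of_closed hq fun _ hx _ he _ hy => ECest_step_unobs hx he.1 he.2 hy

theorem URset_ECest : URset δ Eobsᶜ (S α) (ECest δ Eobs S X0 α) = ECest δ Eobs S X0 α :=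
  (URset_subset_ECest subset_rfl).antisymm (subset_URset _)

theorem ECest_nil : ECest δ Eobs S X0 [] = URset δ Eobsᶜ (S []) X0 := by
  refine Set.Subset.antisymm (fun x hx => ?_) (URset_subset_ECest subset_ECest_nil)
  refine ECest_induction (motive := fun α x => α = [] → x ∈ URset δ Eobsᶜ (S []) X0)
    (fun x hx _ => subset_URset X0 hx) (fun α σ x y _ _ _ _ h => by simp at h) ?_ hx rfl
  rintro _ σ x y ih hunobs hctrl hy rfl
  exact URset_step (ih rfl) ⟨hunobs, hctrl⟩ hy

theorem mem_ECest_append_singleton_iff {x : X} :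
    x ∈ ECest δ Eobs S X0 (α ++ [σ]) ↔ σ ∈ Eobs ∧ σ ∈ S α ∧
      x ∈ URset δ Eobsᶜ (S (α ++ [σ])) (NXset δ σ (ECest δ Eobs S X0 α)) := by
  constructor
  · intro hx
    refine ECest_induction (motive := fun β x => β = α ++ [σ] → σ ∈ Eobs ∧ σ ∈ S α ∧
      x ∈ URset δ Eobsᶜ (S (α ++ [σ])) (NXset δ σ (ECest δ Eobs S X0 α)))
      (fun x _ h => by simp at h) ?_ ?_ hx rfl
    · intro β τ y x hy hobs hctrl hstep heq
      obtain ⟨rfl, rfl⟩ := by simpa using List.append_inj' heq rfl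
      exact ⟨hobs, hctrl, subset_URset _ ⟨y, hy, hstep⟩⟩
    · rintro _ τ y x ih hunobs hctrl hstep rfl
      obtain ⟨hσ, hσS, hy⟩ := ih rfl
      exact ⟨hσ, hσS, URset_step hy ⟨hunobs, hctrl⟩ hstep⟩
  · rintro ⟨hobs, hctrl, hx⟩
    refine URset_subset_ECest ?_ hx
    rintro y ⟨u, hu, hy⟩
    exact ECest_step_obs hu hobs hctrl hy

theorem ECest_append_singleton (hobs : σ ∈ Eobs) (hctrl : σ ∈ S α) :
    ECest δ Eobs S X0 (α ++ [σ]) =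
      URset δ Eobsᶜ (S (α ++ [σ])) (NXset δ σ (ECest δ Eobs S X0 α)) := by
  ext x
  simp only [mem_ECest_append_singleton_iff, hobs, hctrl, true_and]

theorem ECest_append_singleton_nonempty_iff :
    (ECest δ Eobs S X0 (α ++ [σ])).Nonempty ↔
      σ ∈ Eobs ∧ σ ∈ S α ∧ (NXset δ σ (ECest δ Eobs S X0 α)).Nonempty := by
  rw [← URset_nonempty_iff (δ := δ) (Euo := Eobsᶜ) (γ := S (α ++ [σ]))
    (q := NXset δ σ (ECest δ Eobs S X0 α))]
  simp only [Set.Nonempty, mem_ECest_append_singleton_iff, exists_and_left]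

theorem ECest_nonempty_of_prefix {β : List E} (hβ : β <+: α)
    (hα : (ECest δ Eobs S X0 α).Nonempty) : (ECest δ Eobs S X0 β).Nonempty := by
  obtain ⟨t, rfl⟩ := hβ
  induction t using List.reverseRecOn with
  | nil => simpa using hα
  | append_singleton t σ ih =>
    rw [← List.append_assoc] at hα
    obtain ⟨-, -, -, x, hx, -⟩ := ECest_append_singleton_nonempty_iff.1 hα
    exact ih ⟨x, hx⟩

theorem ECest_append_toList {a : Option E} (ha : ∀ τ ∈ a, τ ∈ Eobs ∧ τ ∈ S α) :
    ECest δ Eobs S X0 (α ++ a.toList) =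
      URset δ Eobsᶜ (S (α ++ a.toList)) (NXopt δ a (ECest δ Eobs S X0 α)) := by
  cases a with
  | none => simpa [NXopt] using URset_ECest.symm
  | some τ => exact ECest_append_singleton (ha τ rfl).1 (ha τ rfl).2

theorem ECest_append_toList_nonempty_iff {a : Option E} :
    (ECest δ Eobs S X0 (α ++ a.toList)).Nonempty ↔
      (∀ τ ∈ a, τ ∈ Eobs ∧ τ ∈ S α) ∧ (NXopt δ a (ECest δ Eobs S X0 α)).Nonempty := by
  cases a with
  | none => simp [NXopt]
  | some τ => simp [NXopt, ECest_append_singleton_nonempty_iff, and_assoc]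

theorem CLLang_augDelta_iff {p : X × X} {s : List E} :
    CLLang (augDelta δ) Eobs S p s ↔ CLLang δ Eobs S p.2 s := by
  constructor <;> intro hs <;> induction hs with
  | nil => exact .nil
  | snoc s σ _ hrun hctrl ih => exact .snoc s σ ih (by simpa [runStr_augDelta] using hrun) hctrl

theorem EIest_eq_Iset_ECest_augDelta :
    EIest δ Eobs S X0 α = Iset (ECest (augDelta δ) Eobs S (augX0 X0) α) := by
  ext x0
  constructor
  · rintro ⟨hx0, s, hs, hα⟩
    obtain ⟨x, hx⟩ := hs.exists_runStr_eq_some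
    exact ⟨(x0, x), ⟨(x0, x0), ⟨hx0, rfl⟩, s, CLLang_augDelta_iff.2 hs, hα,
      by simp [runStr_augDelta, hx]⟩, rfl⟩
  · rintro ⟨_, ⟨⟨y0, y⟩, ⟨hy0, hy⟩, s, hs, hα, hrun⟩, rfl⟩
    obtain rfl : y = y0 := hy
    rw [runStr_augDelta] at hrun
    obtain ⟨x, -, rfl⟩ := Option.map_eq_some_iff.1 hrun
    exact ⟨hy0, s, CLLang_augDelta_iff.1 hs, hα⟩

theorem EIest_nonempty_iff :
    (EIest δ Eobs S X0 α).Nonempty ↔ (ECest (augDelta δ) Eobs S (augX0 X0) α).Nonempty := by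
  rw [EIest_eq_Iset_ECest_augDelta, Iset, Set.image_nonempty]

theorem EIest_nonempty_of_prefix {β : List E} (hβ : β <+: α)
    (hα : (EIest δ Eobs S X0 α).Nonempty) : (EIest δ Eobs S X0 β).Nonempty :=
  EIest_nonempty_iff.2 (ECest_nonempty_of_prefix hβ (EIest_nonempty_iff.1 hα))

theorem mem_projSet_CLLangAll_iff :
    α ∈ projSet Eobs (CLLangAll δ Eobs S X0) ↔ (EIest δ Eobs S X0 α).Nonempty :=
  ⟨fun ⟨s, ⟨x0, hx0, hs⟩, hα⟩ => ⟨x0, hx0, s, hs, hα⟩,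
    fun ⟨x0, hx0, s, hs, hα⟩ => ⟨s, ⟨x0, hx0, hs⟩, hα⟩⟩

theorem mem_projSet_Lang_of_EIest_nonempty (hα : (EIest δ Eobs S X0 α).Nonempty) :
    α ∈ projSet Eobs (Lang δ X0) := by
  obtain ⟨x0, hx0, s, hs, hα⟩ := hα
  exact ⟨s, ⟨x0, hx0, Option.isSome_iff_exists.2 hs.exists_runStr_eq_some⟩, hα⟩

end Estimates

section Supervisor

variable {δ : X → E → Option X} {Eobs : Set E} {S : List E → Set E} {X0 : Set X}
  {ξ : Z → E → Option Z}

theorem runStr_proj_eq_some (hloop : ∀ z σ z', ξ z σ = some z' → z' ≠ z → σ ∈ Eobs)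
    {s : List E} {z z' : Z} (hrun : runStr ξ z s = some z') :
    runStr ξ z (proj Eobs s) = some z' := by
  induction s generalizing z with
  | nil => exact hrun
  | cons σ s ih =>
    obtain ⟨y, hy, htail⟩ := Option.bind_eq_some_iff.1 hrun
    by_cases hσ : σ ∈ Eobs
    · simpa [proj, hσ, runStr, hy] using ih htail
    · obtain rfl : y = z := by_contra fun hne => hσ (hloop _ _ _ hy hne)
      simpa [proj, hσ] using ih htail

theorem Realizes.exists_runStr_eq_some {z0 : Z} (hreal : Realizes ξ z0 δ Eobs S X0)
    {β : List E} (hβ : (ECest δ Eobs S X0 β).Nonempty) :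
    ∃ z, runStr ξ z0 β = some z ∧ ΔH ξ z = S β := by
  obtain ⟨x, x0, hx0, s, hs, rfl, -⟩ := hβ
  obtain ⟨z, hz, hactive⟩ := hreal.2 s ⟨x0, hx0, hs⟩
  exact ⟨z, runStr_proj_eq_some hreal.1 hz, hactive⟩

end Supervisor

section Attackers

variable {δ : X → E → Option X} {Eobs Ev : Set E} {X0 : Set X} {A : List E → Option E}

theorem gA_nil : gA A [] = [] := rfl

theorem gA_append_singleton (α : List E) (σ : E) :
    gA A (α ++ [σ]) = gA A α ++ (A (α ++ [σ])).toList := by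
  have hprefix : ∀ i ∈ List.range α.length,
      A ((α ++ [σ]).take (i + 1)) = A (α.take (i + 1)) := fun i hi => by
    rw [List.take_append_of_le_length (Nat.succ_le_of_lt (List.mem_range.1 hi))]
  simp only [gA, List.length_append, List.length_singleton, List.range_succ,
    List.filterMap_append, List.filterMap_congr hprefix]
  rw [List.filterMap_cons, List.take_of_length_le (by simp)]
  cases A (α ++ [σ]) <;> rfl

theorem gA_prefix_gA_append (α β : List E) : gA A α <+: gA A (α ++ β) := by
  induction β using List.reverseRecOn with
  | nil => simp
  | append_singleton β σ ih =>
    rw [← List.append_assoc, gA_append_singleton]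
    exact ih.trans (List.prefix_append _ _)

theorem some_mem_Vmap_self (σ : E) : some σ ∈ Vmap Ev σ := by
  by_cases hσ : σ ∈ Ev <;> simp [Vmap, hσ]

theorem eq_some_of_mem_Vmap {σ : E} {a : Option E} (ha : a ∈ Vmap Ev σ) (hσ : σ ∉ Ev) :
    a = some σ := by
  simpa [Vmap, hσ] using ha

theorem mem_of_some_mem_Vmap (hv : Ev ⊆ Eobs) {σ τ : E} (hσ : σ ∈ Eobs)
    (hτ : some τ ∈ Vmap Ev σ) : τ ∈ Eobs := by
  by_cases hσv : σ ∈ Ev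
  · exact hv (by simpa [Vmap, hσv] using hτ)
  · exact Option.some.inj (eq_some_of_mem_Vmap hτ hσv) ▸ hσ

theorem IsAttacker.mem_Vmap (hA : IsAttacker δ Eobs Ev X0 A) {α : List E} {σ : E}
    (hα : α ++ [σ] ∈ projSet Eobs (Lang δ X0)) : A (α ++ [σ]) ∈ Vmap Ev σ := by
  by_cases hσ : σ ∈ Ev
  · exact (hA.2 α σ hα).2 hσ
  · exact (hA.2 α σ hα).1 hσ ▸ some_mem_Vmap_self σ

end Attackers

section AllAttackStructure

variable {δ : X → E → Option X} {Eobs Euo Ev : Set E} {ξ : Z → E → Option Z} {Xsec : Set X}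
  {q : Set X} {qt : Set (X × X)} {z : Z} {σ : E} {a : Option E}

theorem AASf_inr_inr : AASf δ Eobs Euo Ev ξ (Sum.inr (q, qt, z, σ)) (Sum.inr a) =
    if a ∈ Vmap Ev σ then
      if (NXopt δ a (URset δ Euo (ΔH ξ z) q)).Nonempty then
        (runStr ξ z a.toList).map fun z' => Sum.inl (NXopt δ a (URset δ Euo (ΔH ξ z) q),
          NXset (augDelta δ) σ (URset (augDelta δ) Euo (ΔH ξ z) qt), some z')
      else some (Sum.inl (NXopt δ a (URset δ Euo (ΔH ξ z) q),
        NXset (augDelta δ) σ (URset (augDelta δ) Euo (ΔH ξ z) qt), none))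
    else none := by
  cases a <;> simp only [AASf, NXopt, Option.toList, runStr_singleton]
  rfl

theorem AASf_inr_eq_some_inl {e' : EnvState X Z}
    (h : AASf δ Eobs Euo Ev ξ (Sum.inr (q, qt, z, σ)) (Sum.inr a) = some (Sum.inl e')) :
    a ∈ Vmap Ev σ ∧
      e'.2.1 = NXset (augDelta δ) σ (URset (augDelta δ) Euo (ΔH ξ z) qt) := by
  rw [AASf_inr_inr] at h
  split_ifs at h with hV
  · obtain ⟨z', -, h⟩ := Option.map_eq_some_iff.1 h
    exact ⟨hV, (Sum.inl.inj h) ▸ rfl⟩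
  · exact ⟨hV, (Sum.inl.inj (Option.some.inj h)) ▸ rfl⟩

theorem AASf_inr_eq_some_inl_some_iff {q' : Set X} {qt' : Set (X × X)} {z' : Z} :
    AASf δ Eobs Euo Ev ξ (Sum.inr (q, qt, z, σ)) (Sum.inr a) =
        some (Sum.inl (q', qt', some z')) ↔
      a ∈ Vmap Ev σ ∧ NXopt δ a (URset δ Euo (ΔH ξ z) q) = q' ∧ q'.Nonempty ∧
        NXset (augDelta δ) σ (URset (augDelta δ) Euo (ΔH ξ z) qt) = qt' ∧
        runStr ξ z a.toList = some z' := by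
  rw [AASf_inr_inr]
  split_ifs with hV hne
  · simp only [Option.map_eq_some_iff, Sum.inl.injEq, Prod.mk.injEq, Option.some.injEq]
    constructor
    · rintro ⟨_, hrun, rfl, rfl, rfl⟩
      exact ⟨hV, rfl, hne, rfl, hrun⟩
    · rintro ⟨-, rfl, -, rfl, hrun⟩
      exact ⟨z', hrun, rfl, rfl, rfl⟩
  · simp only [Option.some.injEq, Sum.inl.injEq, Prod.mk.injEq, reduceCtorEq, and_false,
      false_iff]
    rintro ⟨-, rfl, hne', -⟩
    exact hne hne'
  · simp [hV]

theorem exists_isSome_AASf_inr (hσ : σ ∈ ΔH ξ z) :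
    ∃ a, (AASf δ Eobs Euo Ev ξ (Sum.inr (q, qt, z, σ)) (Sum.inr a)).isSome := by
  refine ⟨some σ, ?_⟩
  rw [AASf_inr_inr, if_pos (some_mem_Vmap_self σ)]
  split_ifs
  · rw [Option.isSome_map, Option.toList_some, runStr_singleton]
    exact hσ
  · rfl

theorem AASf_eq_some_inr_iff {st : MState X Z E} {ev : MEvent E} :
    AASf δ Eobs Euo Ev ξ st ev = some (Sum.inr (q, qt, z, σ)) ↔
      st = Sum.inl (q, qt, some z) ∧ ev = Sum.inl σ ∧
        σ ∈ Oset (augDelta δ) Eobs Euo qt (ΔH ξ z) := by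
  constructor
  · intro h
    rcases st with ⟨q', qt', _ | z'⟩ | ⟨q', qt', z', τ⟩ <;> rcases ev with ρ | a
    case inl.some.inl =>
      simp only [AASf] at h
      split_ifs at h with hO
      cases h
      exact ⟨rfl, rfl, hO⟩
    case inr.inr => rw [AASf_inr_inr] at h; split_ifs at h <;> simp at h
    all_goals simp [AASf] at h
  · rintro ⟨rfl, rfl, hO⟩
    simp [AASf, hO]

theorem exists_of_AASf_eq_some_inl {st : MState X Z E} {ev : MEvent E} {e : EnvState X Z}
    (h : AASf δ Eobs Euo Ev ξ st ev = some (Sum.inl e)) :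
    ∃ qa a, st = Sum.inr qa ∧ ev = Sum.inr a := by
  rcases st with ⟨q, qt, _ | z⟩ | qa <;> rcases ev with τ | a
  case inr.inr => exact ⟨qa, a, rfl, rfl⟩
  case inl.some.inl => simp only [AASf] at h; split_ifs at h; simp at h
  all_goals simp [AASf] at h

theorem AASf_eq_some_of_SAASf {st st' : MState X Z E} {ev : MEvent E}
    (h : SAASf δ Eobs Euo Ev ξ Xsec st ev = some st') :
    AASf δ Eobs Euo Ev ξ st ev = some st' := by
  rcases st with e | qa
  · simp only [SAASf] at h
    split_ifs at h
    exact h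
  · exact h

/-- One round of a structure with transition function `f`: from the environment state `e` the
plant generates `σ`, the attacker answers with `a`, and the environment state becomes `e'`. -/
def Round (f : MState X Z E → MEvent E → Option (MState X Z E)) (e : EnvState X Z) (σ : E)
    (a : Option E) (e' : EnvState X Z) : Prop :=
  runStr f (Sum.inl e) [Sum.inl σ, Sum.inr a] = some (Sum.inl e')

theorem round_iff {f : MState X Z E → MEvent E → Option (MState X Z E)} {e e' : EnvState X Z} :
    Round f e σ a e' ↔
      ∃ st, f (Sum.inl e) (Sum.inl σ) = some st ∧ f st (Sum.inr a) = some (Sum.inl e') := by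
  simp [Round, runStr, Option.bind_eq_some_iff]

theorem round_AASf_iff {e e' : EnvState X Z} :
    Round (AASf δ Eobs Euo Ev ξ) e σ a e' ↔
      ∃ q qt z, e = (q, qt, some z) ∧ σ ∈ Oset (augDelta δ) Eobs Euo qt (ΔH ξ z) ∧
        AASf δ Eobs Euo Ev ξ (Sum.inr (q, qt, z, σ)) (Sum.inr a) = some (Sum.inl e') := by
  rw [round_iff]
  constructor
  · rintro ⟨st, hst, he'⟩
    obtain ⟨⟨q, qt, z, τ⟩, _, rfl, -⟩ := exists_of_AASf_eq_some_inl he'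
    obtain ⟨he, hτ, hO⟩ := AASf_eq_some_inr_iff.1 hst
    cases hτ
    exact ⟨q, qt, z, Sum.inl.inj he, hO, he'⟩
  · rintro ⟨q, qt, z, rfl, hO, he'⟩
    exact ⟨_, AASf_eq_some_inr_iff.2 ⟨rfl, rfl, hO⟩, he'⟩

theorem round_AASf_mk_iff {e' : EnvState X Z} :
    Round (AASf δ Eobs Euo Ev ξ) (q, qt, some z) σ a e' ↔
      σ ∈ Oset (augDelta δ) Eobs Euo qt (ΔH ξ z) ∧
        AASf δ Eobs Euo Ev ξ (Sum.inr (q, qt, z, σ)) (Sum.inr a) = some (Sum.inl e') := by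
  rw [round_AASf_iff]
  constructor
  · rintro ⟨_, _, _, heq, h⟩
    cases heq
    exact h
  · exact fun h => ⟨q, qt, z, rfl, h⟩

theorem Round.mem_Vmap {e e' : EnvState X Z} (h : Round (AASf δ Eobs Euo Ev ξ) e σ a e') :
    a ∈ Vmap Ev σ := by
  obtain ⟨q, qt, z, -, -, h⟩ := round_AASf_iff.1 h
  exact (AASf_inr_eq_some_inl h).1

theorem Round.augmented_eq {e e' : EnvState X Z} (h : Round (AASf δ Eobs Euo Ev ξ) e σ a e') :
    e'.2.1 = NXset (augDelta δ) σ (URset (augDelta δ) Euo (ΔHopt ξ e.2.2) e.2.1) := by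
  obtain ⟨q, qt, z, rfl, -, h⟩ := round_AASf_iff.1 h
  exact (AASf_inr_eq_some_inl h).2

theorem Round.augmented_nonempty {e e' : EnvState X Z}
    (h : Round (AASf δ Eobs Euo Ev ξ) e σ a e') : e'.2.1.Nonempty := by
  rw [h.augmented_eq]
  obtain ⟨q, qt, z, rfl, hO, -⟩ := round_AASf_iff.1 h
  exact (mem_Oset_iff.1 hO).2.2

theorem Round.posDet {e e' : EnvState X Z} (h : Round (AASf δ Eobs Euo Ev ξ) e σ a e')
    (he : PosDet Xsec e) : PosDet Xsec e' := by
  rw [PosDet, h.augmented_eq]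
  exact (Iset_NXset_augDelta_subset _ _).trans ((Iset_URset_augDelta _).trans_subset he)

end AllAttackStructure

section SingleAttackStructure

variable {δ : X → E → Option X} {Eobs Euo Ev : Set E} {ξ : Z → E → Option Z} {Xsec X0 : Set X}
  {z0 : Z} {fm : MState X Z E → MEvent E → Option (MState X Z E)}

theorem obs_append_round (h : List (MEvent E)) (σ : E) (a : Option E) :
    obs (h ++ [Sum.inl σ, Sum.inr a]) = obs h ++ [σ] := by
  simp [obs]

theorem runStr_append_round {st : MState X Z E} {h : List (MEvent E)} {e e' : EnvState X Z}
    {σ : E} {a : Option E} (hrun : runStr fm st h = some (Sum.inl e))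
    (hround : Round fm e σ a e') :
    runStr fm st (h ++ [Sum.inl σ, Sum.inr a]) = some (Sum.inl e') := by
  rw [runStr_append, hrun]
  exact hround

theorem IsSAS.AASf_eq_some (hm : IsSAS δ Eobs Euo Ev ξ z0 X0 Xsec fm) {st st' : MState X Z E}
    {ev : MEvent E} (h : fm st ev = some st') : AASf δ Eobs Euo Ev ξ st ev = some st' :=
  AASf_eq_some_of_SAASf (hm.1 st ev st' h)

theorem IsSAS.round_AASf (hm : IsSAS δ Eobs Euo Ev ξ z0 X0 Xsec fm) {e e' : EnvState X Z} {σ : E}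
    {a : Option E} (h : Round fm e σ a e') : Round (AASf δ Eobs Euo Ev ξ) e σ a e' := by
  obtain ⟨st, hst, he'⟩ := round_iff.1 h
  exact round_iff.2 ⟨st, hm.AASf_eq_some hst, hm.AASf_eq_some he'⟩

theorem IsSAS.eq_nil_or_append_round (hm : IsSAS δ Eobs Euo Ev ξ z0 X0 Xsec fm)
    {h : List (MEvent E)} (hL : LeM fm (AASq0 X0 z0) h) :
    h = [] ∨ ∃ h' e σ a e', h = h' ++ [Sum.inl σ, Sum.inr a] ∧
      runStr fm (AASq0 X0 z0) h' = some (Sum.inl e) ∧ Round fm e σ a e' := by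
  obtain ⟨e', hrun⟩ := hL
  rcases List.eq_nil_or_concat' h with rfl | ⟨h₁, ev₁, rfl⟩
  · exact Or.inl rfl
  rw [runStr_append_singleton] at hrun
  obtain ⟨st₁, hrun₁, hstep₁⟩ := Option.bind_eq_some_iff.1 hrun
  obtain ⟨⟨q, qt, z, σ⟩, a, rfl, rfl⟩ := exists_of_AASf_eq_some_inl (hm.AASf_eq_some hstep₁)
  rcases List.eq_nil_or_concat' h₁ with rfl | ⟨h₂, ev₂, rfl⟩
  · simp [runStr, AASq0] at hrun₁
  rw [runStr_append_singleton] at hrun₁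
  obtain ⟨st₂, hrun₂, hstep₂⟩ := Option.bind_eq_some_iff.1 hrun₁
  obtain ⟨rfl, rfl, -⟩ := AASf_eq_some_inr_iff.1 (hm.AASf_eq_some hstep₂)
  exact Or.inr ⟨h₂, _, σ, a, e', by simp, hrun₂, round_iff.2 ⟨_, hstep₂, hstep₁⟩⟩

theorem IsSAS.action_unique (hm : IsSAS δ Eobs Euo Ev ξ z0 X0 Xsec fm) {h : List (MEvent E)}
    {e e₁ e₂ : EnvState X Z} {σ : E} {a₁ a₂ : Option E}
    (hrun : runStr fm (AASq0 X0 z0) h = some (Sum.inl e)) (h₁ : Round fm e σ a₁ e₁)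
    (h₂ : Round fm e σ a₂ e₂) : a₁ = a₂ := by
  obtain ⟨st₁, hst₁, he₁⟩ := round_iff.1 h₁
  obtain ⟨st₂, hst₂, he₂⟩ := round_iff.1 h₂
  obtain rfl : st₁ = st₂ := Option.some.inj (hst₁.symm.trans hst₂)
  obtain ⟨qa, _, rfl, -⟩ := exists_of_AASf_eq_some_inl (hm.AASf_eq_some he₁)
  have hreach : ReachableFrom fm (AASq0 X0 z0) (Sum.inr qa) :=
    ⟨h ++ [Sum.inl σ], by rw [runStr_append_singleton, hrun]; exact hst₁⟩
  exact Sum.inr.inj ((hm.2.1 qa hreach).unique (by simp [he₁]) (by simp [he₂]))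

theorem IsSAS.eq_of_obs_eq (hm : IsSAS δ Eobs Euo Ev ξ z0 X0 Xsec fm) {h₁ h₂ : List (MEvent E)}
    (hL₁ : LeM fm (AASq0 X0 z0) h₁) (hL₂ : LeM fm (AASq0 X0 z0) h₂) (hobs : obs h₁ = obs h₂) :
    h₁ = h₂ := by
  generalize hα : obs h₁ = α at hobs
  induction α using List.reverseRecOn generalizing h₁ h₂ with
  | nil =>
    rcases hm.eq_nil_or_append_round hL₁ with rfl | ⟨_, _, _, _, _, rfl, -⟩
    · rcases hm.eq_nil_or_append_round hL₂ with rfl | ⟨_, _, _, _, _, rfl, -⟩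
      · rfl
      · simp [obs_append_round] at hobs
    · simp [obs_append_round] at hα
  | append_singleton α σ ih =>
    rcases hm.eq_nil_or_append_round hL₁ with rfl | ⟨h₁, e₁, σ₁, a₁, e₁', rfl, hrun₁, hround₁⟩
    · simp [obs] at hα
    rcases hm.eq_nil_or_append_round hL₂ with rfl | ⟨h₂, e₂, σ₂, a₂, e₂', rfl, hrun₂, hround₂⟩
    · simp [obs] at hobs
    rw [obs_append_round] at hα hobs
    obtain ⟨hα', rfl⟩ := by simpa using List.append_inj' hα rfl
    obtain ⟨hobs', rfl⟩ := by simpa using List.append_inj' hobs rfl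
    obtain rfl := ih ⟨e₁, hrun₁⟩ ⟨e₂, hrun₂⟩ hα' hobs'
    obtain rfl : e₁ = e₂ := by simpa [hrun₁] using hrun₂
    rw [hm.action_unique hrun₁ hround₁ hround₂]

/-- The attack strategy induced by a structure with transition function `fm`: the last action of
an extended string with the given observation, and no tampering where there is no such string. -/
noncomputable def inducedAttack (fm : MState X Z E → MEvent E → Option (MState X Z E))
    (st : MState X Z E) (β : List E) : Option E :=
  if hβ : ∃ a h, LeM fm st (h ++ [Sum.inr a]) ∧ obs (h ++ [Sum.inr a]) = β then hβ.choose
  else β.getLast?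

theorem IsSAS.inducedStrategy (hm : IsSAS δ Eobs Euo Ev ξ z0 X0 Xsec fm) :
    InducedStrategy δ Eobs X0 fm z0 (inducedAttack fm (AASq0 X0 z0)) := by
  refine ⟨dif_neg ?_, fun α σ _ => ⟨fun hnone => ?_, fun h hL hobs => ?_⟩⟩
  · rintro ⟨a, h, hL, hobs⟩
    have : h ++ [Sum.inr a] = [] := hm.eq_of_obs_eq hL ⟨_, rfl⟩ (by rw [hobs]; rfl)
    simp at this
  · rw [inducedAttack, dif_neg fun ⟨a, h, hL, hobs⟩ => hnone _ hL hobs]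
    simp
  · rcases hm.eq_nil_or_append_round hL with rfl | ⟨h', _, τ, a, _, rfl, -⟩
    · simp [obs] at hobs
    have hex : ∃ b h, LeM fm (AASq0 X0 z0) (h ++ [Sum.inr b]) ∧
        obs (h ++ [Sum.inr b]) = α ++ [σ] :=
      ⟨a, h' ++ [Sum.inl τ], by simpa using hL, by simpa using hobs⟩
    obtain ⟨h'', hL'', hobs''⟩ := hex.choose_spec
    rw [hm.eq_of_obs_eq hL hL'' (hobs.trans hobs''.symm), inducedAttack, dif_pos hex]
    simp

theorem InducedStrategy.eq_of_round {A : List E → Option E}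
    (hA : InducedStrategy δ Eobs X0 fm z0 A) {h : List (MEvent E)} {e e' : EnvState X Z} {σ : E}
    {a : Option E} (hrun : runStr fm (AASq0 X0 z0) h = some (Sum.inl e))
    (hround : Round fm e σ a e') (hσ : obs h ++ [σ] ∈ projSet Eobs (Lang δ X0)) :
    A (obs h ++ [σ]) = a := by
  have := (hA.2 (obs h) σ hσ).2 _ ⟨e', runStr_append_round hrun hround⟩ (obs_append_round h σ a)
  simpa [eq_comm] using this

theorem InducedStrategy.isAttacker {A : List E → Option E}
    (hA : InducedStrategy δ Eobs X0 fm z0 A) (hm : IsSAS δ Eobs Euo Ev ξ z0 X0 Xsec fm) :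
    IsAttacker δ Eobs Ev X0 A := by
  have hV : ∀ α σ, α ++ [σ] ∈ projSet Eobs (Lang δ X0) → A (α ++ [σ]) ∈ Vmap Ev σ := by
    intro α σ hα
    by_cases hex : ∃ h, LeM fm (AASq0 X0 z0) h ∧ obs h = α ++ [σ]
    · obtain ⟨h, hL, hobs⟩ := hex
      rcases hm.eq_nil_or_append_round hL with rfl | ⟨h', e, τ, a, e', rfl, hrun, hround⟩
      · simp [obs] at hobs
      rw [obs_append_round] at hobs
      obtain ⟨rfl, rfl⟩ := by simpa using List.append_inj' hobs rfl
      rw [hA.eq_of_round hrun hround hα]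
      exact (hm.round_AASf hround).mem_Vmap
    · rw [(hA.2 α σ hα).1 fun h hL hobs => hex ⟨h, hL, hobs⟩]
      exact some_mem_Vmap_self σ
  exact ⟨hA.1, fun α σ hα => ⟨eq_some_of_mem_Vmap (hV α σ hα), fun _ => hV α σ hα⟩⟩

end SingleAttackStructure

section Masking

variable {δ : X → E → Option X} {Eobs Euo Ev : Set E} {ξ : Z → E → Option Z} {Xsec : Set X}

/-- A set of augmented states is masked if each plant state that it pairs with a secret initial
state is also paired with a non-secret one. An environment state is undetectable when the
unobservable reach of its augmented estimate is masked and the estimate meets `Xsec`. -/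
def Masked (Xsec : Set X) (qt : Set (X × X)) : Prop :=
  ∀ p ∈ qt, p.1 ∈ Xsec → ∃ p' ∈ qt, p'.2 = p.2 ∧ p'.1 ∉ Xsec

theorem Masked.NXset {qt : Set (X × X)} (h : Masked Xsec qt) (σ : E) :
    Masked Xsec (NXset (augDelta δ) σ qt) := by
  rintro ⟨x0, x⟩ hp hsec
  obtain ⟨y, hy, hstep⟩ := mem_NXset_augDelta_iff.1 hp
  obtain ⟨⟨x1, _⟩, hmem, rfl, hnot⟩ := h _ hy hsec
  exact ⟨(x1, x), mem_NXset_augDelta_iff.2 ⟨_, hmem, hstep⟩, rfl, hnot⟩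

theorem Masked.URset {qt : Set (X × X)} (h : Masked Xsec qt) (γ : Set E) :
    Masked Xsec (URset (augDelta δ) Euo γ qt) := by
  rintro ⟨x0, x⟩ hp hsec
  obtain ⟨y, hy, w, hw, hrun⟩ := mem_URset_augDelta_iff.1 hp
  obtain ⟨⟨x1, _⟩, hmem, rfl, hnot⟩ := h _ hy hsec
  exact ⟨(x1, x), mem_URset_augDelta_iff.2 ⟨_, hmem, w, hw, hrun⟩, rfl, hnot⟩

theorem Masked.not_Iset_subset {qt : Set (X × X)} (h : Masked Xsec qt) (hne : qt.Nonempty) :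
    ¬ Iset qt ⊆ Xsec := by
  intro hsub
  obtain ⟨p, hp⟩ := hne
  obtain ⟨p', hp', -, hnot⟩ := h p hp (hsub ⟨p, hp, rfl⟩)
  exact hnot (hsub ⟨p', hp', rfl⟩)

theorem masked_of_Iset_inter_eq_empty {qt : Set (X × X)} (h : Iset qt ∩ Xsec = ∅) :
    Masked Xsec qt :=
  fun p hp hsec => (h.subset ⟨⟨p, hp, rfl⟩, hsec⟩).elim

/-- A positive detected environment state can be reached from `e` in exactly `n` rounds of the
AAS. Positivity holds vacuously when the augmented estimate is empty, hence the second conjunct. -/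
def RevealableIn (δ : X → E → Option X) (Eobs Euo Ev : Set E) (ξ : Z → E → Option Z)
    (Xsec : Set X) : ℕ → EnvState X Z → Prop
  | 0, e => PosDet Xsec e ∧ e.2.1.Nonempty
  | n + 1, e => ∃ σ a e', Round (AASf δ Eobs Euo Ev ξ) e σ a e' ∧
      RevealableIn δ Eobs Euo Ev ξ Xsec n e'

theorem RevealableIn.not_masked {n : ℕ} {e : EnvState X Z}
    (hn : RevealableIn δ Eobs Euo Ev ξ Xsec n e) :
    ¬ Masked Xsec (URset (augDelta δ) Euo (ΔHopt ξ e.2.2) e.2.1) := by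
  intro hmask
  induction n generalizing e with
  | zero =>
    exact hmask.not_Iset_subset (URset_nonempty_iff.2 hn.2)
      ((Iset_URset_augDelta _).trans_subset hn.1)
  | succ n ih =>
    obtain ⟨σ, a, e', hround, hn⟩ := hn
    exact ih hn (Masked.URset (hround.augmented_eq ▸ hmask.NXset σ) _)

theorem RevealableIn.SAASf_eq {n : ℕ} {e : EnvState X Z}
    (hn : RevealableIn δ Eobs Euo Ev ξ Xsec n e) (hpos : ¬ PosDet Xsec e) (ev : MEvent E) :
    SAASf δ Eobs Euo Ev ξ Xsec (Sum.inl e) ev = AASf δ Eobs Euo Ev ξ (Sum.inl e) ev := by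
  refine if_neg ?_
  rintro (h | h | h)
  · exact hpos h
  · refine hn.not_masked (masked_of_Iset_inter_eq_empty ?_)
    rwa [Iset_URset_augDelta]
  · exact hn.not_masked h.2

end Masking

section GreedyPolicy

variable {δ : X → E → Option X} {Eobs Euo Ev : Set E} {ξ : Z → E → Option Z} {Xsec X0 : Set X}
  {π : AtkState X Z E → Option E} {z0 : Z}

/-- An attack action at `qa` that is greedy: it is defined whenever the supervisor enables the
pending event, and no other action leads to a positive detected state in fewer rounds. -/
structure IsGreedyAction (δ : X → E → Option X) (Eobs Euo Ev : Set E) (ξ : Z → E → Option Z)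
    (Xsec : Set X) (qa : AtkState X Z E) (b : Option E) : Prop where
  isSome : qa.2.2.2 ∈ ΔH ξ qa.2.2.1 → (AASf δ Eobs Euo Ev ξ (Sum.inr qa) (Sum.inr b)).isSome
  exists_le : ∀ a e n, AASf δ Eobs Euo Ev ξ (Sum.inr qa) (Sum.inr a) = some (Sum.inl e) →
    RevealableIn δ Eobs Euo Ev ξ Xsec n e → ∃ m ≤ n, ∃ e',
      AASf δ Eobs Euo Ev ξ (Sum.inr qa) (Sum.inr b) = some (Sum.inl e') ∧
      RevealableIn δ Eobs Euo Ev ξ Xsec m e'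

theorem exists_isGreedyAction (δ : X → E → Option X) (Eobs Euo Ev : Set E)
    (ξ : Z → E → Option Z) (Xsec : Set X) (qa : AtkState X Z E) :
    ∃ b, IsGreedyAction δ Eobs Euo Ev ξ Xsec qa b := by
  by_cases hex : ∃ n a e, AASf δ Eobs Euo Ev ξ (Sum.inr qa) (Sum.inr a) = some (Sum.inl e) ∧
      RevealableIn δ Eobs Euo Ev ξ Xsec n e
  · obtain ⟨b, e', hb, hmin⟩ := Nat.find_spec hex
    exact ⟨b, fun _ => by simp [hb],
      fun a e n ha hn => ⟨_, Nat.find_min' hex ⟨a, e, ha, hn⟩, e', hb, hmin⟩⟩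
  · have hdefined : ∃ b, qa.2.2.2 ∈ ΔH ξ qa.2.2.1 →
        (AASf δ Eobs Euo Ev ξ (Sum.inr qa) (Sum.inr b)).isSome := by
      by_cases hσ : qa.2.2.2 ∈ ΔH ξ qa.2.2.1
      · obtain ⟨b, hb⟩ := exists_isSome_AASf_inr hσ
        exact ⟨b, fun _ => hb⟩
      · exact ⟨none, fun h => absurd h hσ⟩
    obtain ⟨b, hb⟩ := hdefined
    exact ⟨b, hb, fun a e n ha hn => absurd ⟨n, a, e, ha, hn⟩ hex⟩

/-- The sub-automaton of the simplified AAS in which the attacker plays the memoryless policy `π`: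
it keeps at each attack state `qa` only the action `π qa`. -/
noncomputable def policyStructure (δ : X → E → Option X) (Eobs Euo Ev : Set E)
    (ξ : Z → E → Option Z) (Xsec : Set X) (π : AtkState X Z E → Option E) :
    MState X Z E → MEvent E → Option (MState X Z E)
  | Sum.inl e, ev => SAASf δ Eobs Euo Ev ξ Xsec (Sum.inl e) ev
  | Sum.inr qa, ev =>
      if ev = Sum.inr (π qa) then AASf δ Eobs Euo Ev ξ (Sum.inr qa) ev else none

theorem SAASf_eq_some_of_policyStructure {st st' : MState X Z E} {ev : MEvent E}
    (h : policyStructure δ Eobs Euo Ev ξ Xsec π st ev = some st') :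
    SAASf δ Eobs Euo Ev ξ Xsec st ev = some st' := by
  rcases st with e | qa
  · exact h
  · simp only [policyStructure] at h
    split_ifs at h
    exact h

theorem isSAS_policyStructure (hπ : ∀ qa : AtkState X Z E, qa.2.2.2 ∈ ΔH ξ qa.2.2.1 →
      (AASf δ Eobs Euo Ev ξ (Sum.inr qa) (Sum.inr (π qa))).isSome) :
    IsSAS δ Eobs Euo Ev ξ z0 X0 Xsec (policyStructure δ Eobs Euo Ev ξ Xsec π) := by
  refine ⟨fun st ev st' => SAASf_eq_some_of_policyStructure, ?_, fun _ _ _ => rfl⟩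
  rintro ⟨q, qt, z, σ⟩ ⟨t, hrun⟩
  have henabled : σ ∈ ΔH ξ z := by
    rcases List.eq_nil_or_concat' t with rfl | ⟨t, ev, rfl⟩
    · simp [runStr, AASq0] at hrun
    rw [runStr_append_singleton] at hrun
    obtain ⟨st, -, hstep⟩ := Option.bind_eq_some_iff.1 hrun
    have hstep := AASf_eq_some_of_SAASf (SAASf_eq_some_of_policyStructure hstep)
    exact (AASf_eq_some_inr_iff.1 hstep).2.2.1.2
  refine ⟨Sum.inr (π (q, qt, z, σ)), by simpa [policyStructure] using hπ _ henabled, ?_⟩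
  intro ev hev
  by_contra hne
  simp [policyStructure, hne] at hev

theorem RevealableIn.exists_round_policyStructure
    (hπ : ∀ qa, IsGreedyAction δ Eobs Euo Ev ξ Xsec qa (π qa)) {n : ℕ} {e : EnvState X Z}
    (hn : RevealableIn δ Eobs Euo Ev ξ Xsec (n + 1) e) (hpos : ¬ PosDet Xsec e) :
    ∃ m ≤ n, ∃ σ a e', Round (policyStructure δ Eobs Euo Ev ξ Xsec π) e σ a e' ∧
      RevealableIn δ Eobs Euo Ev ξ Xsec m e' := by
  have hkeep := hn.SAASf_eq hpos
  obtain ⟨σ, a, e₁, hround, hn⟩ := hn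
  obtain ⟨q, qt, z, rfl, hO, hstep⟩ := round_AASf_iff.1 hround
  obtain ⟨m, hm, e', hgreedy, hrev⟩ := (hπ _).exists_le _ _ _ hstep hn
  refine ⟨m, hm, σ, π (q, qt, z, σ), e', round_iff.2 ⟨Sum.inr (q, qt, z, σ), ?_, ?_⟩, hrev⟩
  · exact (hkeep _).trans (AASf_eq_some_inr_iff.2 ⟨rfl, rfl, hO⟩)
  · simpa [policyStructure] using hgreedy

end GreedyPolicy

section Tracking

variable {δ : X → E → Option X} {Eobs Ev : Set E} {ξ : Z → E → Option Z} {z0 z : Z}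
  {S : List E → Set E} {X0 Xsec : Set X} {A : List E → Option E} {β : List E}
  {q : Set X} {qt : Set (X × X)} {σ : E} {a : Option E}

/-- The environment state `(q, qt, z)` tracks the attacker `A` along the observation `β`, along
which `A` is stealthy: `z` is the supervisor state after the doctored observation, and `q` and
`qt` are, up to unobservable reach, the supervisor's current-state estimate and the estimate of
the augmented plant. -/
structure Tracks (δ : X → E → Option X) (Eobs : Set E) (ξ : Z → E → Option Z) (z0 : Z)
    (S : List E → Set E) (X0 : Set X) (A : List E → Option E) (β : List E)
    (q : Set X) (qt : Set (X × X)) (z : Z) : Prop where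
  run_eq : runStr ξ z0 (gA A β) = some z
  active_eq : ΔH ξ z = S (gA A β)
  stealthy : (ECest δ Eobs S X0 (gA A β)).Nonempty
  current_eq : URset δ Eobsᶜ (ΔH ξ z) q = ECest δ Eobs S X0 (gA A β)
  augmented_eq : URset (augDelta δ) Eobsᶜ (ΔH ξ z) qt =
    ECest (augDelta δ) Eobs (fun β => S (gA A β)) (augX0 X0) β

theorem Tracks.init (hreal : Realizes ξ z0 δ Eobs S X0) (hX0 : X0.Nonempty) :
    Tracks δ Eobs ξ z0 S X0 A [] X0 (augX0 X0) z0 := by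
  have hstealthy : (ECest δ Eobs S X0 (gA A [])).Nonempty := hX0.mono subset_ECest_nil
  obtain ⟨z, hz, hactive⟩ := hreal.exists_runStr_eq_some hstealthy
  obtain rfl : z0 = z := Option.some.inj hz
  exact ⟨hz, hactive, hstealthy, by rw [gA_nil, ECest_nil, hactive, gA_nil],
    by rw [ECest_nil, hactive]⟩

theorem Tracks.mem_Oset_iff (hT : Tracks δ Eobs ξ z0 S X0 A β q qt z) :
    σ ∈ Oset (augDelta δ) Eobs Eobsᶜ qt (ΔH ξ z) ↔
      (EIest δ Eobs (fun β => S (gA A β)) X0 (β ++ [σ])).Nonempty := by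
  rw [DES.mem_Oset_iff, hT.augmented_eq, hT.active_eq, EIest_nonempty_iff,
    ECest_append_singleton_nonempty_iff]

theorem Tracks.ECest_augDelta_append_singleton (hT : Tracks δ Eobs ξ z0 S X0 A β q qt z)
    (hσ : σ ∈ Oset (augDelta δ) Eobs Eobsᶜ qt (ΔH ξ z)) :
    ECest (augDelta δ) Eobs (fun β => S (gA A β)) (augX0 X0) (β ++ [σ]) =
      URset (augDelta δ) Eobsᶜ (S (gA A (β ++ [σ])))
        (NXset (augDelta δ) σ (URset (augDelta δ) Eobsᶜ (ΔH ξ z) qt)) := by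
  rw [hT.augmented_eq]
  exact ECest_append_singleton hσ.1.1 (hT.active_eq ▸ hσ.1.2)

theorem Tracks.EIest_append_singleton (hT : Tracks δ Eobs ξ z0 S X0 A β q qt z)
    {e' : EnvState X Z} (hround : Round (AASf δ Eobs Eobsᶜ Ev ξ) (q, qt, some z) σ a e') :
    EIest δ Eobs (fun β => S (gA A β)) X0 (β ++ [σ]) = Iset e'.2.1 := by
  rw [EIest_eq_Iset_ECest_augDelta, hround.augmented_eq,
    hT.ECest_augDelta_append_singleton (round_AASf_mk_iff.1 hround).1, Iset_URset_augDelta]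
  rfl

theorem Tracks.isDetectable (hT : Tracks δ Eobs ξ z0 S X0 A β q qt z)
    {e' : EnvState X Z} (hround : Round (AASf δ Eobs Eobsᶜ Ev ξ) (q, qt, some z) σ a e')
    (hpos : PosDet Xsec e') : ISDetectable δ Eobs S X0 Xsec A := by
  have hO := (round_AASf_mk_iff.1 hround).1
  exact ⟨β, σ, hO.1.1, mem_projSet_CLLangAll_iff.2 (hT.mem_Oset_iff.1 hO), hT.stealthy,
    (hT.EIest_append_singleton hround).trans_subset hpos⟩

theorem Tracks.append_singleton (hv : Ev ⊆ Eobs) (hreal : Realizes ξ z0 δ Eobs S X0)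
    (hT : Tracks δ Eobs ξ z0 S X0 A β q qt z) {q' : Set X} {qt' : Set (X × X)} {z' : Z}
    (hround : Round (AASf δ Eobs Eobsᶜ Ev ξ) (q, qt, some z) σ (A (β ++ [σ]))
      (q', qt', some z')) :
    Tracks δ Eobs ξ z0 S X0 A (β ++ [σ]) q' qt' z' := by
  obtain ⟨hO, hstep⟩ := round_AASf_mk_iff.1 hround
  obtain ⟨hV, rfl, hne, rfl, hrun⟩ := AASf_inr_eq_some_inl_some_iff.1 hstep
  have hrun' : runStr ξ z0 (gA A (β ++ [σ])) = some z' := by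
    rw [gA_append_singleton, runStr_append, hT.run_eq]
    exact hrun
  have hfeasible : ∀ τ ∈ A (β ++ [σ]), τ ∈ Eobs ∧ τ ∈ S (gA A β) := by
    intro τ hτ
    rw [Option.mem_def.1 hτ] at hV hrun
    refine ⟨mem_of_some_mem_Vmap hv hO.1.1 hV, hT.active_eq ▸ Option.isSome_iff_exists.2 ⟨z', ?_⟩⟩
    rwa [Option.toList_some, runStr_singleton] at hrun
  have hest := ECest_append_toList (δ := δ) (X0 := X0) hfeasible
  rw [← gA_append_singleton, ← hT.current_eq] at hest
  have hstealthy : (ECest δ Eobs S X0 (gA A (β ++ [σ]))).Nonempty := by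
    rw [hest]
    exact URset_nonempty_iff.2 hne
  obtain ⟨_, hz, hactive⟩ := hreal.exists_runStr_eq_some hstealthy
  obtain rfl := Option.some.inj (hz.symm.trans hrun')
  exact ⟨hz, hactive, hstealthy, by rw [hest, hactive],
    by rw [hT.ECest_augDelta_append_singleton hO, hactive]⟩

theorem Tracks.exists_round (hT : Tracks δ Eobs ξ z0 S X0 A β q qt z)
    (hσ : (EIest δ Eobs (fun β => S (gA A β)) X0 (β ++ [σ])).Nonempty)
    (hV : A (β ++ [σ]) ∈ Vmap Ev σ) (hstealthy : (ECest δ Eobs S X0 (gA A (β ++ [σ]))).Nonempty) :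
    ∃ q' qt' z', Round (AASf δ Eobs Eobsᶜ Ev ξ) (q, qt, some z) σ (A (β ++ [σ]))
      (q', qt', some z') := by
  rw [gA_append_singleton] at hstealthy
  obtain ⟨hfeasible, hne⟩ := ECest_append_toList_nonempty_iff.1 hstealthy
  have hrun : ∃ z', runStr ξ z (A (β ++ [σ])).toList = some z' := by
    cases ha : A (β ++ [σ]) with
    | none => exact ⟨z, rfl⟩
    | some τ =>
      rw [Option.toList_some, runStr_singleton]
      have hτ : τ ∈ ΔH ξ z := hT.active_eq ▸ (hfeasible τ ha).2
      exact Option.isSome_iff_exists.1 hτ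
  obtain ⟨z', hz'⟩ := hrun
  refine ⟨_, _, z', round_AASf_mk_iff.2 ⟨hT.mem_Oset_iff.2 hσ,
    AASf_inr_eq_some_inl_some_iff.2 ⟨hV, rfl, ?_, rfl, hz'⟩⟩⟩
  rwa [hT.current_eq]

-- In the last round stealthiness is no longer required, and `A`'s own action may be undefined in
-- the AAS, so some other defined action is played; the augmented estimate does not depend on it.
theorem Tracks.revealableIn_one (hT : Tracks δ Eobs ξ z0 S X0 A β q qt z)
    (hσ : (EIest δ Eobs (fun β => S (gA A β)) X0 (β ++ [σ])).Nonempty)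
    (hsec : EIest δ Eobs (fun β => S (gA A β)) X0 (β ++ [σ]) ⊆ Xsec) :
    RevealableIn δ Eobs Eobsᶜ Ev ξ Xsec 1 (q, qt, some z) := by
  have hO := hT.mem_Oset_iff.2 hσ
  obtain ⟨a, ha⟩ := exists_isSome_AASf_inr (δ := δ) (Eobs := Eobs) (Euo := Eobsᶜ) (Ev := Ev)
    (q := q) (qt := qt) hO.1.2
  obtain ⟨e' | qa, he'⟩ := Option.isSome_iff_exists.1 ha
  · have hround := round_AASf_mk_iff.2 ⟨hO, he'⟩
    exact ⟨σ, a, e', hround, (hT.EIest_append_singleton hround).symm.trans_subset hsec,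
      hround.augmented_nonempty⟩
  · cases (AASf_eq_some_inr_iff.1 he').1

theorem Tracks.exists_revealableIn (hv : Ev ⊆ Eobs) (hreal : Realizes ξ z0 δ Eobs S X0)
    (hA : IsAttacker δ Eobs Ev X0 A) (hT : Tracks δ Eobs ξ z0 S X0 A β q qt z) (γ : List E)
    (hσ : (EIest δ Eobs (fun β => S (gA A β)) X0 (β ++ γ ++ [σ])).Nonempty)
    (hstealthy : (ECest δ Eobs S X0 (gA A (β ++ γ))).Nonempty)
    (hsec : EIest δ Eobs (fun β => S (gA A β)) X0 (β ++ γ ++ [σ]) ⊆ Xsec) :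
    ∃ n, RevealableIn δ Eobs Eobsᶜ Ev ξ Xsec (n + 1) (q, qt, some z) := by
  induction γ generalizing β q qt z with
  | nil =>
    rw [List.append_nil] at hσ hsec
    exact ⟨0, hT.revealableIn_one hσ hsec⟩
  | cons τ γ ih =>
    rw [List.append_cons β τ γ] at hσ hstealthy hsec
    have hτ : (EIest δ Eobs (fun β => S (gA A β)) X0 (β ++ [τ])).Nonempty :=
      EIest_nonempty_of_prefix (by simp) hσ
    have hτ_stealthy : (ECest δ Eobs S X0 (gA A (β ++ [τ]))).Nonempty :=
      ECest_nonempty_of_prefix (gA_prefix_gA_append _ γ) hstealthy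
    obtain ⟨q', qt', z', hround⟩ := hT.exists_round hτ
      (hA.mem_Vmap (mem_projSet_Lang_of_EIest_nonempty hτ)) hτ_stealthy
    obtain ⟨n, hn⟩ := ih (hT.append_singleton hv hreal hround) hσ hstealthy hsec
    exact ⟨n + 1, τ, _, _, hround, hn⟩

theorem InducedStrategy.isDetectable_of_revealableIn (hv : Ev ⊆ Eobs)
    (hreal : Realizes ξ z0 δ Eobs S X0) {π : AtkState X Z E → Option E}
    (hπ : ∀ qa, IsGreedyAction δ Eobs Eobsᶜ Ev ξ Xsec qa (π qa))
    (hA : InducedStrategy δ Eobs X0 (policyStructure δ Eobs Eobsᶜ Ev ξ Xsec π) z0 A)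
    {h : List (MEvent E)} (hrun : runStr (policyStructure δ Eobs Eobsᶜ Ev ξ Xsec π)
      (AASq0 X0 z0) h = some (Sum.inl (q, qt, some z)))
    (hT : Tracks δ Eobs ξ z0 S X0 A (obs h) q qt z) {n : ℕ}
    (hn : RevealableIn δ Eobs Eobsᶜ Ev ξ Xsec (n + 1) (q, qt, some z)) :
    ISDetectable δ Eobs S X0 Xsec A := by
  induction n using Nat.strong_induction_on generalizing h q qt z with
  | _ n ih =>
  by_cases hpos : PosDet Xsec (q, qt, some z)
  · obtain ⟨σ, a, e', hround, -⟩ := hn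
    exact hT.isDetectable hround (hround.posDet hpos)
  obtain ⟨m, hmn, σ, a, e', hround, hm⟩ := hn.exists_round_policyStructure hπ hpos
  have hSAS : IsSAS δ Eobs Eobsᶜ Ev ξ z0 X0 Xsec _ := isSAS_policyStructure fun qa => (hπ qa).isSome
  have hround' := hSAS.round_AASf hround
  rcases m with _ | m
  · exact hT.isDetectable hround' hm.1
  obtain ⟨q', qt', z', rfl⟩ : ∃ q' qt' z', e' = (q', qt', some z') := by
    obtain ⟨_, _, _, hnext, -⟩ := hm
    obtain ⟨q', qt', z', rfl, -⟩ := round_AASf_iff.1 hnext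
    exact ⟨q', qt', z', rfl⟩
  have hfollow : A (obs h ++ [σ]) = a := hA.eq_of_round hrun hround
    (mem_projSet_Lang_of_EIest_nonempty (hT.mem_Oset_iff.1 (round_AASf_mk_iff.1 hround').1))
  have hT' := hT.append_singleton hv hreal (hfollow.symm ▸ hround')
  rw [← obs_append_round h σ a] at hT'
  exact ih m hmn (runStr_append_round hrun hround) hT' hm

end Tracking

theorem stmt15_general (δ : X → E → Option X) (Eobs Euo Ev : Set E)
    (hpart : ∀ e, e ∈ Euo ↔ e ∉ Eobs) (hv : Ev ⊆ Eobs) (S : List E → Set E) (X0 : Set X)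
    (ξ : Z → E → Option Z) (z0 : Z) (hreal : Realizes ξ z0 δ Eobs S X0) (Xsec : Set X) :
    (∃ A : List E → Option E, IsAttacker δ Eobs Ev X0 A ∧
        ISDetectable δ Eobs S X0 Xsec A) ↔
      (∃ fm : MState X Z E → MEvent E → Option (MState X Z E),
        ∃ Am : List E → Option E, IsSAS δ Eobs Euo Ev ξ z0 X0 Xsec fm ∧
          InducedStrategy δ Eobs X0 fm z0 Am ∧ ISDetectable δ Eobs S X0 Xsec Am) := by
  obtain rfl : Euo = Eobsᶜ := Set.ext hpart
  constructor
  · rintro ⟨A, hA, α, σ, -, hσ, hstealthy, hsec⟩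
    choose π hπ using exists_isGreedyAction δ Eobs Eobsᶜ Ev ξ Xsec
    have hSAS : IsSAS δ Eobs Eobsᶜ Ev ξ z0 X0 Xsec (policyStructure δ Eobs Eobsᶜ Ev ξ Xsec π) :=
      isSAS_policyStructure fun qa => (hπ qa).isSome
    have hX0 : X0.Nonempty := let ⟨_, x0, hx0, _⟩ := hstealthy; ⟨x0, hx0⟩
    obtain ⟨n, hn⟩ := (Tracks.init hreal hX0).exists_revealableIn hv hreal hA α
      (mem_projSet_CLLangAll_iff.1 hσ) hstealthy hsec
    exact ⟨_, _, hSAS, hSAS.inducedStrategy, hSAS.inducedStrategy.isDetectable_of_revealableIn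
      hv hreal hπ (h := []) rfl (Tracks.init hreal hX0) hn⟩
  · rintro ⟨fm, Am, hSAS, hAm, hdet⟩
    exact ⟨Am, hAm.isAttacker hSAS, hdet⟩

/-! ## STATEMENT 15 (Theorem 2) -/
theorem stmt15 [Fintype X] [Fintype E] [Fintype Z] (δ : X → E → Option X)
    (Eobs Euo Ev : Set E) (hpart : ∀ e, e ∈ Euo ↔ e ∉ Eobs) (hv : Ev ⊆ Eobs)
    (Euc : Set E) (S : List E → Set E) (hΓ : ∀ α, Euc ⊆ S α) (X0 : Set X)
    (ξ : Z → E → Option Z) (z0 : Z) (hreal : Realizes ξ z0 δ Eobs S X0)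
    (Xsec : Set X) (hsec : Xsec ⊆ X0) :
    (∃ A : List E → Option E, IsAttacker δ Eobs Ev X0 A ∧
        ISDetectable δ Eobs S X0 Xsec A) ↔
      (∃ fm : MState X Z E → MEvent E → Option (MState X Z E),
        ∃ Am : List E → Option E, IsSAS δ Eobs Euo Ev ξ z0 X0 Xsec fm ∧
          InducedStrategy δ Eobs X0 fm z0 Am ∧ ISDetectable δ Eobs S X0 Xsec Am) := by
  exact stmt15_general δ Eobs Euo Ev hpart hv S X0 ξ z0 hreal Xsec

end DES
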